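/- For every subset A of ℝ⁺, the following three statements are equivalent: (i) A is nonporous at 0 or 0 ∉ closure(A − {0}); (ii) every sequence (h_n)_{n∈ℕ} of positive real numbers with lim_{n→∞} h_n = 0 belongs to UMP(A); (iii) the pair {A, C} is coherently porous for every C ⊆ ℝ⁺. -/

import Mathlib

/-!
Write (i) for `upperPorosity A = 0 ∨ 0 ∉ closure (A \ {0})`, (ii) for the condition that `UMP A`
contains every positive null sequence, and (iii) for the condition that `UMP A` meets every `UMP C`.

The implication (ii) ⇒ (iii) holds because `UMP C` is never empty (`UMP_nonempty`): the upper limit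
is attained along some sequence, and (ii) puts every such sequence in `UMP A`. For (i) ⇒ (ii), each
alternative of (i) forces the ratio `λ(A,h)/h` to converge as `h → 0⁺`.

The substance is (iii) ⇒ (i). Suppose that `p = upperPorosity A > 0` and that `0` is a limit point
of `A \ {0}`. If `x ∈ A` is small, a gap of `A` below `x (1 + p/2)` cannot straddle `x`: it lies
either in `(0,x)`, so that its length is at most about `p x`, or in `(x, x (1 + p/2))`, so that its
length is at most `(p/2) x`. In both cases the ratio at `x (1 + p/2)` is smaller than `p` by a fixed
amount `ε` (`frequently_ratio_le`). Choose rapidly decreasing points `t n` at which the ratio of `A`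
is at most `p - ε`, and let `C` be the complement of `⋃ n, (t n / 2, t n)`. Then
`upperPorosity C ≥ 1/2`, and the ratio of `C` at `h` is near `1/2` only when `h` is near some `t n`
(`exists_near_of_gap`). As `λ(A,·)` is nondecreasing and 1-Lipschitz, the ratio of `A` at such an `h`
stays below `p - ε/2`, so no sequence belongs to both `UMP A` and `UMP C`.
-/

open Filter Set

/-- `gapLength E h` = λ(E,h): the length of the largest open subinterval of (0,h)
containing no point of `E` (0 if no such interval exists). -/
noncomputable def gapLength (E : Set ℝ) (h : ℝ) : ℝ :=
  sSup {l : ℝ | ∃ a b : ℝ, 0 ≤ a ∧ a ≤ b ∧ b ≤ h ∧ Set.Ioo a b ∩ E = ∅ ∧ l = b - a}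

/-- The right upper porosity of `E` at 0. -/
noncomputable def upperPorosity (E : Set ℝ) : ℝ :=
  Filter.limsup (fun h => gapLength E h / h) (nhdsWithin (0:ℝ) (Set.Ioi 0))

/-- The right lower porosity of `E` at 0. -/
noncomputable def lowerPorosity (E : Set ℝ) : ℝ :=
  Filter.liminf (fun h => gapLength E h / h) (nhdsWithin (0:ℝ) (Set.Ioi 0))

/-- `UMP E`: sequences of positive reals tending to 0 along which the upper limit
in the definition of porosity is attained. -/
def UMP (E : Set ℝ) : Set (ℕ → ℝ) :=
  {h | (∀ n, 0 < h n) ∧ Filter.Tendsto h Filter.atTop (nhds 0) ∧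
    Filter.Tendsto (fun n => gapLength E (h n) / h n) Filter.atTop (nhds (upperPorosity E))}

/-- The set of all strongly porous at 0 subsets of ℝ⁺. -/
def SP : Set (Set ℝ) := {E | E ⊆ Set.Ici 0 ∧ upperPorosity E = 1}

/-- `I` is an ideal on the set `X`. -/
def IsIdealOn (X : Set ℝ) (I : Set (Set ℝ)) : Prop :=
  I.Nonempty ∧ (∀ B ∈ I, B ⊆ X) ∧ (∀ B ∈ I, ∀ C : Set ℝ, C ⊆ B → C ∈ I) ∧
    (∀ B ∈ I, ∀ C ∈ I, B ∪ C ∈ I) ∧ X ∉ I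

/-- `I` is a `Γ`-maximal ideal on `X`. -/
def IsMaximalIdealIn (X : Set ℝ) (Γ I : Set (Set ℝ)) : Prop :=
  IsIdealOn X I ∧ I ⊆ Γ ∧ ∀ J : Set (Set ℝ), IsIdealOn X J → I ⊆ J → J ⊆ Γ → I = J

/-- `Î(SP)`: the intersection of all SP-maximal ideals on ℝ⁺. -/
def hatISP : Set (Set ℝ) :=
  {A | ∀ I : Set (Set ℝ), IsMaximalIdealIn (Set.Ici 0) SP I → A ∈ I}

/-- The q-blow up `E(q)` of a set `E ⊆ ℝ⁺`. -/
def blowUp (E : Set ℝ) (q : ℝ) : Set ℝ := ⋃ x ∈ E, Set.Ioo (q⁻¹ * x) (q * x)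

lemma gapLength_bddAbove (E : Set ℝ) (h : ℝ) : BddAbove
    {l : ℝ | ∃ a b : ℝ, 0 ≤ a ∧ a ≤ b ∧ b ≤ h ∧ Set.Ioo a b ∩ E = ∅ ∧ l = b - a} := by
  refine ⟨h, ?_⟩
  rintro l ⟨a, b, ha, hab, hb, -, rfl⟩
  linarith

lemma gapLength_nonempty (E : Set ℝ) {h : ℝ} (hh : 0 ≤ h) : Set.Nonempty
    {l : ℝ | ∃ a b : ℝ, 0 ≤ a ∧ a ≤ b ∧ b ≤ h ∧ Set.Ioo a b ∩ E = ∅ ∧ l = b - a} :=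
  ⟨0, 0, 0, le_rfl, le_rfl, hh, by simp, by simp⟩

lemma le_gapLength {E : Set ℝ} {h a b : ℝ} (ha : 0 ≤ a) (hab : a ≤ b) (hb : b ≤ h)
    (hE : Set.Ioo a b ∩ E = ∅) : b - a ≤ gapLength E h :=
  le_csSup (gapLength_bddAbove E h) ⟨a, b, ha, hab, hb, hE, rfl⟩

lemma gapLength_le {E : Set ℝ} {h c : ℝ} (hh : 0 ≤ h)
    (H : ∀ a b, 0 ≤ a → a ≤ b → b ≤ h → Set.Ioo a b ∩ E = ∅ → b - a ≤ c) :
    gapLength E h ≤ c := by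
  refine csSup_le (gapLength_nonempty E hh) ?_
  rintro l ⟨a, b, ha, hab, hb, hE, rfl⟩
  exact H a b ha hab hb hE

lemma exists_gap {E : Set ℝ} {h c : ℝ} (hh : 0 ≤ h) (hc : c < gapLength E h) :
    ∃ a b, 0 ≤ a ∧ a ≤ b ∧ b ≤ h ∧ Set.Ioo a b ∩ E = ∅ ∧ c < b - a := by
  obtain ⟨l, ⟨a, b, ha, hab, hb, hE, rfl⟩, hl⟩ :=
    exists_lt_of_lt_csSup (gapLength_nonempty E hh) hc
  exact ⟨a, b, ha, hab, hb, hE, hl⟩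

lemma gapLength_nonneg (E : Set ℝ) {h : ℝ} (hh : 0 ≤ h) : 0 ≤ gapLength E h := by
  simpa using le_gapLength (E := E) (le_refl 0) (le_refl 0) hh (by simp)

lemma gapLength_le_self (E : Set ℝ) {h : ℝ} (hh : 0 ≤ h) : gapLength E h ≤ h :=
  gapLength_le hh fun a b ha _ hb _ => by linarith

lemma gapLength_mono (E : Set ℝ) {h k : ℝ} (hh : 0 ≤ h) (hk : h ≤ k) :
    gapLength E h ≤ gapLength E k :=
  gapLength_le hh fun _ _ ha hab hb hE => le_gapLength ha hab (hb.trans hk) hE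

/-- Truncating a gap at `h` shows that `gapLength E` is 1-Lipschitz. -/
lemma gapLength_le_add (E : Set ℝ) {h k : ℝ} (hh : 0 ≤ h) (hk : h ≤ k) :
    gapLength E k ≤ gapLength E h + (k - h) := by
  refine gapLength_le (hh.trans hk) fun a b ha hab hb hE => ?_
  rcases le_total b h with h1 | h1
  · linarith [le_gapLength ha hab h1 hE]
  · rcases le_total a h with h2 | h2
    · have := le_gapLength (E := E) ha h2 le_rfl
        (subset_eq_empty (inter_subset_inter_left _ (Ioo_subset_Ioo_right h1)) hE)
      linarith
    · linarith [gapLength_nonneg E hh]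

lemma eventually_ratio_mem (E : Set ℝ) : ∀ᶠ h in nhdsWithin (0:ℝ) (Set.Ioi 0),
    0 ≤ gapLength E h / h ∧ gapLength E h / h ≤ 1 := by
  filter_upwards [self_mem_nhdsWithin] with h hh
  have hh : 0 < h := hh
  exact ⟨div_nonneg (gapLength_nonneg E hh.le) hh.le,
    div_le_one_of_le₀ (gapLength_le_self E hh.le) hh.le⟩

lemma ratio_isBounded (E : Set ℝ) : IsBoundedUnder (· ≤ ·) (nhdsWithin (0:ℝ) (Set.Ioi 0))
    (fun h => gapLength E h / h) :=
  ⟨1, eventually_map.2 ((eventually_ratio_mem E).mono fun _ h => h.2)⟩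

lemma ratio_isCobounded (E : Set ℝ) : IsCoboundedUnder (· ≤ ·) (nhdsWithin (0:ℝ) (Set.Ioi 0))
    (fun h => gapLength E h / h) :=
  IsBoundedUnder.isCoboundedUnder_le
    ⟨0, eventually_map.2 ((eventually_ratio_mem E).mono fun _ h => h.1)⟩

lemma eventually_ratio_lt (E : Set ℝ) {c : ℝ} (hc : upperPorosity E < c) :
    ∀ᶠ h in nhdsWithin (0:ℝ) (Set.Ioi 0), gapLength E h / h < c :=
  eventually_lt_of_limsup_lt hc (ratio_isBounded E)

lemma frequently_lt_ratio (E : Set ℝ) {c : ℝ} (hc : c < upperPorosity E) :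
    ∃ᶠ h in nhdsWithin (0:ℝ) (Set.Ioi 0), c < gapLength E h / h :=
  frequently_lt_of_lt_limsup (ratio_isCobounded E) hc

lemma upperPorosity_nonneg (E : Set ℝ) : 0 ≤ upperPorosity E :=
  le_limsup_of_frequently_le ((eventually_ratio_mem E).mono fun _ h => h.1).frequently
    (ratio_isBounded E)

lemma upperPorosity_le_one (E : Set ℝ) : upperPorosity E ≤ 1 :=
  limsup_le_of_le (ratio_isCobounded E) ((eventually_ratio_mem E).mono fun _ h => h.2)

lemma tendsto_ratio {A : Set ℝ}
    (H : upperPorosity A = 0 ∨ (0:ℝ) ∉ closure (A \ {0})) :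
    Tendsto (fun h => gapLength A h / h) (nhdsWithin (0:ℝ) (Set.Ioi 0))
      (nhds (upperPorosity A)) := by
  rcases H with H | H
  · rw [H]
    refine tendsto_order.2 ⟨fun c hc => ?_, fun c hc => eventually_ratio_lt A (by rwa [H])⟩
    exact (eventually_ratio_mem A).mono fun h hh => hc.trans_le hh.1
  · rw [Metric.mem_closure_iff] at H
    push Not at H
    obtain ⟨δ, hδ, H⟩ := H
    have key : Tendsto (fun h => gapLength A h / h) (nhdsWithin (0:ℝ) (Set.Ioi 0)) (nhds 1) := by
      refine tendsto_const_nhds.congr' ?_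
      filter_upwards [Ioo_mem_nhdsGT hδ] with h hh
      have hgap : gapLength A h = h := by
        refine le_antisymm (gapLength_le_self A hh.1.le) ?_
        have := le_gapLength (E := A) (le_refl 0) hh.1.le le_rfl (by
          ext x
          simp only [mem_inter_iff, mem_Ioo, mem_empty_iff_false, iff_false, not_and]
          intro hx hxA
          have := H x ⟨hxA, hx.1.ne'⟩
          rw [Real.dist_eq, zero_sub, abs_neg, abs_of_pos hx.1] at this
          linarith [hh.2])
        linarith
      rw [hgap, div_self hh.1.ne']
    have : upperPorosity A = 1 := key.limsup_eq
    rwa [this]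

lemma UMP_nonempty (C : Set ℝ) : (UMP C).Nonempty := by
  have hex : ∀ n : ℕ, ∃ h : ℝ, 0 < h ∧ h < 1 / ((n:ℝ) + 1) ∧
      upperPorosity C - 1 / ((n:ℝ) + 1) < gapLength C h / h ∧
      gapLength C h / h < upperPorosity C + 1 / ((n:ℝ) + 1) := by
    intro n
    have hn : (0:ℝ) < 1 / ((n:ℝ) + 1) := Nat.one_div_pos_of_nat
    obtain ⟨h, h1, h2, h3⟩ := ((frequently_lt_ratio C (sub_lt_self _ hn)).and_eventually
      ((eventually_ratio_lt C (lt_add_of_pos_right _ hn)).and (Ioo_mem_nhdsGT hn))).exists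
    exact ⟨h, h3.1, h3.2, h1, h2⟩
  choose h h0 h1 h2 h3 using hex
  have hl := tendsto_one_div_add_atTop_nhds_zero_nat (𝕜 := ℝ)
  refine ⟨h, h0, ?_, ?_⟩
  · exact squeeze_zero (fun n => (h0 n).le) (fun n => (h1 n).le) hl
  · refine tendsto_of_tendsto_of_tendsto_of_le_of_le ?_ ?_ (fun n => (h2 n).le) (fun n => (h3 n).le)
    · simpa using hl.const_sub (upperPorosity C)
    · simpa using hl.const_add (upperPorosity C)

/-- If `A` is porous at `0` and accumulates there, its ratio `λ(A,h)/h` stays a fixed amount below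
the upper porosity at arbitrarily small `h`, namely at `h = x (1 + p/2)` with `x ∈ A` small. -/
lemma frequently_ratio_le {A : Set ℝ} (hA : A ⊆ Set.Ici 0) (hp : 0 < upperPorosity A)
    (h0 : (0:ℝ) ∈ closure (A \ {0})) :
    ∃ ε > 0, ∀ δ > 0, ∃ h, 0 < h ∧ h < δ ∧ gapLength A h ≤ (upperPorosity A - ε) * h := by
  have hp1 := upperPorosity_le_one A
  set p := upperPorosity A with hpdef
  -- This value gives `p + ε ≤ (p - ε) (1 + p/2)` and `p/2 ≤ p - ε`.
  refine ⟨p ^ 2 / 8, by positivity, fun δ hδ => ?_⟩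
  have hε : 0 < p ^ 2 / 8 := by positivity
  have hev := eventually_ratio_lt A (show upperPorosity A < p + p ^ 2 / 8 by linarith)
  obtain ⟨η, hη, hev⟩ := mem_nhdsGT_iff_exists_Ioo_subset.1 hev
  have hη : 0 < η := hη
  rw [Metric.mem_closure_iff] at h0
  obtain ⟨x, ⟨hxA, hx0⟩, hx⟩ := h0 (min η (δ / 2)) (by positivity)
  have hxpos : 0 < x := lt_of_le_of_ne (hA hxA) (Ne.symm hx0)
  rw [Real.dist_eq, zero_sub, abs_neg, abs_of_pos hxpos, lt_min_iff] at hx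
  have hxg : gapLength A x / x < p + p ^ 2 / 8 := hev ⟨hxpos, hx.1⟩
  rw [div_lt_iff₀ hxpos] at hxg
  have hxh : 0 < x * (1 + p / 2) := by positivity
  refine ⟨x * (1 + p / 2), hxh, by nlinarith, ?_⟩
  have e1 : p + p ^ 2 / 8 ≤ (p - p ^ 2 / 8) * (1 + p / 2) := by nlinarith
  have e2 : p / 2 ≤ (p - p ^ 2 / 8) * (1 + p / 2) := by nlinarith
  have e1' := mul_le_mul_of_nonneg_right e1 hxpos.le
  have e2' := mul_le_mul_of_nonneg_right e2 hxpos.le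
  refine gapLength_le hxh.le fun a b ha hab hb hE => ?_
  by_cases hbx : b ≤ x
  · linarith [le_gapLength ha hab hbx hE]
  · by_cases hax : x ≤ a
    · linarith
    · have : x ∈ Set.Ioo a b ∩ A := ⟨⟨not_le.1 hax, not_le.1 hbx⟩, hxA⟩
      rw [hE] at this
      exact this.elim

/-- The complement in `[0,∞)` of the intervals `(t n / 2, t n)`. -/
def halfGaps (t : ℕ → ℝ) : Set ℝ := {x | 0 ≤ x ∧ ∀ n, x ∉ Set.Ioo (t n / 2) (t n)}

lemma halfGaps_disjoint (t : ℕ → ℝ) (n : ℕ) : Set.Ioo (t n / 2) (t n) ∩ halfGaps t = ∅ := by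
  ext x
  simp only [mem_inter_iff, mem_empty_iff_false, iff_false, not_and]
  exact fun hx hxC => hxC.2 n hx

/-- Every nondegenerate gap of `halfGaps t` lies in one of the removed intervals, since the
endpoints of these intervals belong to `halfGaps t`. -/
lemma exists_near_of_gap {t : ℕ → ℝ} (t0 : ∀ n, 0 < t n) (ht : ∀ m n, m < n → t n < t m / 2)
    {a b : ℝ} (ha : 0 ≤ a) (hab : a < b) (hE : Set.Ioo a b ∩ halfGaps t = ∅) :
    ∃ n, t n / 2 ≤ a ∧ b ≤ t n := by
  have hnot : ∀ x, a < x → x < b → x ∉ halfGaps t := fun x h1 h2 hx => by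
    have : x ∈ Set.Ioo a b ∩ halfGaps t := ⟨⟨h1, h2⟩, hx⟩
    rw [hE] at this
    exact this
  have hmid := hnot ((a + b) / 2) (by linarith) (by linarith)
  have : ∃ n, (a + b) / 2 ∈ Set.Ioo (t n / 2) (t n) := by
    by_contra hcon
    exact hmid ⟨by linarith, fun n hn => hcon ⟨n, hn⟩⟩
  obtain ⟨n, hn1, hn2⟩ := this
  refine ⟨n, ?_, ?_⟩
  · by_contra hlt
    refine hnot (t n / 2) (by linarith) (by linarith) ⟨by linarith [t0 n], fun m hm => ?_⟩
    rcases lt_trichotomy m n with h | rfl | h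
    · linarith [ht m n h, hm.1, t0 n]
    · exact lt_irrefl _ hm.1
    · linarith [ht n m h, hm.2]
  · by_contra hlt
    refine hnot (t n) (by linarith) (by linarith) ⟨(t0 n).le, fun m hm => ?_⟩
    rcases lt_trichotomy m n with h | rfl | h
    · linarith [ht m n h, hm.1]
    · exact lt_irrefl _ hm.2
    · linarith [ht n m h, hm.2, t0 n]

lemma exists_fast_seq {P : ℝ → Prop} (H : ∀ δ > 0, ∃ h, 0 < h ∧ h < δ ∧ P h) :
    ∃ t : ℕ → ℝ, (∀ n, 0 < t n) ∧ (∀ n, P (t n)) ∧ (∀ m n, m < n → t n < t m / 2) ∧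
      Tendsto t atTop (nhds 0) := by
  have H' : ∀ s : {x : ℝ // 0 < x ∧ P x}, ∃ u : {x : ℝ // 0 < x ∧ P x}, u.1 < s.1 / 2 := by
    intro s
    obtain ⟨h, h1, h2, h3⟩ := H (s.1 / 2) (half_pos s.2.1)
    exact ⟨⟨h, h1, h3⟩, h2⟩
  choose f hf using H'
  obtain ⟨s, s1, -, s3⟩ := H 1 one_pos
  let u : ℕ → {x : ℝ // 0 < x ∧ P x} := fun n => f^[n] ⟨s, s1, s3⟩
  have hu : ∀ n, (u (n + 1)).1 < (u n).1 / 2 := fun n => by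
    have : u (n + 1) = f (u n) := Function.iterate_succ_apply' f n _
    rw [this]
    exact hf _
  refine ⟨fun n => (u n).1, fun n => (u n).2.1, fun n => (u n).2.2, fun m n hmn => ?_, ?_⟩
  · induction n, hmn using Nat.le_induction with
    | base => exact hu m
    | succ k _ ih => linarith [hu k, (u k).2.1]
  · have hb : ∀ n, (u n).1 ≤ s * (1 / 2) ^ n := by
      intro n
      induction n with
      | zero => simp [u]
      | succ k ih => rw [pow_succ]; linarith [hu k]
    refine squeeze_zero (fun n => (u n).2.1.le) hb ?_
    simpa using (tendsto_pow_atTop_nhds_zero_of_lt_one (r := (1/2:ℝ)) (by norm_num)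
      (by norm_num)).const_mul s

lemma half_le_upperPorosity_halfGaps {t : ℕ → ℝ} (t0 : ∀ n, 0 < t n)
    (ht : Tendsto t atTop (nhds 0)) : 1 / 2 ≤ upperPorosity (halfGaps t) := by
  have ht' : Tendsto t atTop (nhdsWithin 0 (Set.Ioi 0)) :=
    tendsto_nhdsWithin_iff.2 ⟨ht, Eventually.of_forall t0⟩
  refine le_limsup_of_frequently_le (ht'.frequently (Eventually.frequently
    (Eventually.of_forall fun n => ?_))) (ratio_isBounded _)
  rw [le_div_iff₀ (t0 n)]
  linarith [le_gapLength (half_pos (t0 n)).le (half_lt_self (t0 n)).le le_rfl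
    (halfGaps_disjoint t n)]

lemma exists_not_coherent {A : Set ℝ} (hA : A ⊆ Set.Ici 0) (hp : 0 < upperPorosity A)
    (h0 : (0:ℝ) ∈ closure (A \ {0})) :
    ∃ C : Set ℝ, C ⊆ Set.Ici 0 ∧ ¬ (UMP A ∩ UMP C).Nonempty := by
  obtain ⟨ε, hε, H⟩ := frequently_ratio_le hA hp h0
  obtain ⟨t, t0, tA, tlt, tlim⟩ := exists_fast_seq H
  have hp1 := upperPorosity_le_one A
  refine ⟨halfGaps t, fun x hx => hx.1, ?_⟩
  rintro ⟨h, ⟨hpos, -, hlimA⟩, -, -, hlimC⟩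
  have hhalf := half_le_upperPorosity_halfGaps t0 tlim
  have hεp : ε ≤ upperPorosity A := by
    by_contra hcon
    have := gapLength_nonneg A (t0 0).le
    nlinarith [tA 0, t0 0]
  obtain ⟨n, hnA, hnC⟩ := ((hlimA.eventually_const_lt
    (show upperPorosity A - ε / 2 < upperPorosity A by linarith)).and
    (hlimC.eventually_const_lt
      (show 1 / 2 - ε / 8 < upperPorosity (halfGaps t) by linarith))).exists
  have hn := hpos n
  rw [lt_div_iff₀ hn] at hnA hnC
  obtain ⟨a, b, ha, hab, hb, hE, hc⟩ := exists_gap hn.le hnC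
  have hab' : a < b := by nlinarith
  obtain ⟨k, hk1, hk2⟩ := exists_near_of_gap t0 tlt ha hab' hE
  have htA := tA k
  -- `h n` lies between `t k / (1 + ε/4)` and `t k / (1 - ε/4)`.
  rcases le_total (h n) (t k) with hle | hle
  · have h1 := gapLength_mono A hn.le hle
    have h2 : t k ≤ (1 + ε / 4) * h n := by nlinarith
    have h3 := mul_le_mul_of_nonneg_left h2 (show 0 ≤ upperPorosity A - ε by linarith)
    have h4 : (upperPorosity A - ε) * (1 + ε / 4) ≤ upperPorosity A - ε / 2 := by nlinarith
    nlinarith [mul_le_mul_of_nonneg_right h4 hn.le]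
  · have h1 := gapLength_le_add A (t0 k).le hle
    have h2 : h n - t k ≤ ε / 4 * h n := by nlinarith
    have h3 := mul_le_mul_of_nonneg_left hle (show 0 ≤ upperPorosity A - ε by linarith)
    nlinarith [mul_pos hε hn]

theorem stmt3 (A : Set ℝ) (hA : A ⊆ Set.Ici 0) :
    ((upperPorosity A = 0 ∨ (0:ℝ) ∉ closure (A \ {0})) ↔
      (∀ h : ℕ → ℝ, (∀ n, 0 < h n) → Filter.Tendsto h Filter.atTop (nhds 0) → h ∈ UMP A)) ∧
    ((∀ h : ℕ → ℝ, (∀ n, 0 < h n) → Filter.Tendsto h Filter.atTop (nhds 0) → h ∈ UMP A) ↔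
      (∀ C : Set ℝ, C ⊆ Set.Ici 0 → (UMP A ∩ UMP C).Nonempty)) := by
  have h12 : (upperPorosity A = 0 ∨ (0:ℝ) ∉ closure (A \ {0})) →
      (∀ h : ℕ → ℝ, (∀ n, 0 < h n) → Filter.Tendsto h Filter.atTop (nhds 0) → h ∈ UMP A) :=
    fun H h hpos hlim => ⟨hpos, hlim, (tendsto_ratio H).comp
      (tendsto_nhdsWithin_iff.2 ⟨hlim, Eventually.of_forall hpos⟩)⟩
  have h23 : (∀ h : ℕ → ℝ, (∀ n, 0 < h n) → Filter.Tendsto h Filter.atTop (nhds 0) → h ∈ UMP A) →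
      (∀ C : Set ℝ, C ⊆ Set.Ici 0 → (UMP A ∩ UMP C).Nonempty) := by
    intro H C _
    obtain ⟨h, hh⟩ := UMP_nonempty C
    exact ⟨h, H h hh.1 hh.2.1, hh⟩
  have h31 : (∀ C : Set ℝ, C ⊆ Set.Ici 0 → (UMP A ∩ UMP C).Nonempty) →
      (upperPorosity A = 0 ∨ (0:ℝ) ∉ closure (A \ {0})) := by
    intro H
    by_contra hcon
    push Not at hcon
    obtain ⟨C, hC, hne⟩ := exists_not_coherent hA
      (lt_of_le_of_ne (upperPorosity_nonneg A) (Ne.symm hcon.1)) hcon.2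
    exact hne (H C hC)
  exact ⟨⟨h12, fun H => h31 (h23 H)⟩, ⟨h23, fun H => h12 (h31 H)⟩⟩
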